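/- arXiv:solv-int/9907001 — 2 statements merged into one kernel-verified Lean document; each statement's English description precedes it below -/
import Mathlib

section
/- Let a, b > 0 be real and let N ≥ 1 be a natural number. Define the weight w̃(t) = (1−t)^{(a+1)/2}(1+t)^{(b+1)/2} on (−1,1), the polynomials q̃_{2m+1}(x) = p_{2m+1}(x) and q̃_{2m}(x) = 2^{6m} m! [Γ(a/2+b/2+m+1)Γ(a/2+m+1)Γ(b/2+m+1)/Γ(a+b+4m+2)]·Σ_{j=0}^{m} [Γ(a+b+4j+2)/(j!·2^{6j}·Γ(a/2+b/2+j+1)Γ(a/2+j+1)Γ(b/2+j+1))]·p_{2j}(x), and the normalizations r̃_m = 2^{a+b+4m+2}Γ(2m+2)Γ(a+2m+2)Γ(b+2m+2)Γ(a+b+2m+2)/(Γ(a+b+4m+2)Γ(a+b+4m+4)), where p_k are the monic Jacobi polynomials with parameters a, b and squared norms h_k. Define S̃₄(x,y) = Σ_{m=0}^{N−1} (w̃(x)/(2r̃_m))·(q̃_{2m}(x)·(d/dy)[w̃(y)·q̃_{2m+1}(y)] − q̃_{2m+1}(x)·(d/dy)[w̃(y)·q̃_{2m}(y)]). Then for all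 x, y ∈ (−1, 1): S̃₄(x,y) = (1/2)·(1−x)^{(a+1)/2}(1+x)^{(b+1)/2}(1−y)^{(a−1)/2}(1+y)^{(b−1)/2} Σ_{l=0}^{2N−1} p_l(x)p_l(y)/h_l − ((4N+a+b)/(4h_{2N−1}))·(1−y)^{(a−1)/2}(1+y)^{(b−1)/2}·p_{2N}(y)·∫_x^{1} (1−t)^{(a−1)/2}(1+t)^{(b−1)/2}·p_{2N−1}(t) dt. -/
open MeasureTheory Finset

/-- The Jacobi polynomial `P_n^{(a,b)}`. -/
noncomputable def jacobiP (a b : ℝ) (n : ℕ) (x : ℝ) : ℝ :=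
  ∑ s ∈ range (n + 1),
    (Real.Gamma ((n : ℝ) + a + 1) / (Real.Gamma (a + (s : ℝ) + 1) * (Nat.factorial (n - s)))) *
    (Real.Gamma ((n : ℝ) + b + 1) / (Real.Gamma ((n : ℝ) + b - (s : ℝ) + 1) * (Nat.factorial s))) *
    ((x - 1) / 2) ^ s * ((x + 1) / 2) ^ (n - s)

/-- The monic Jacobi polynomials `p_k = 2^k k! Γ(a+b+k+1)/Γ(a+b+2k+1) · P_k^{(a,b)}`. -/
noncomputable def jacobiMonic (a b : ℝ) (k : ℕ) (x : ℝ) : ℝ :=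
  2 ^ k * (Nat.factorial k) * Real.Gamma (a + b + (k : ℝ) + 1) /
    Real.Gamma (a + b + 2 * (k : ℝ) + 1) * jacobiP a b k x

/-- The squared norms `h_k = ∫_{−1}^1 (1−x)^a (1+x)^b p_k(x)² dx`. -/
noncomputable def jacobiNorm (a b : ℝ) (k : ℕ) : ℝ :=
  2 ^ (a + b + 1 + 2 * (k : ℝ)) * Real.Gamma ((k : ℝ) + 1) *
    Real.Gamma (a + b + (k : ℝ) + 1) * Real.Gamma (a + (k : ℝ) + 1) *
    Real.Gamma (b + (k : ℝ) + 1) /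
    (Real.Gamma (a + b + 2 * (k : ℝ) + 2) * Real.Gamma (a + b + 2 * (k : ℝ) + 1))

/-- The weight `w̃(t) = (1−t)^{(a+1)/2}(1+t)^{(b+1)/2}`. -/
noncomputable def wJSE (a b t : ℝ) : ℝ := (1 - t) ^ ((a + 1) / 2) * (1 + t) ^ ((b + 1) / 2)

/-- `q̃_{2m+1} = p_{2m+1}`, and `q̃_{2m}` the explicit combination of the even
monic Jacobi polynomials. -/
noncomputable def qJSE (a b : ℝ) (j : ℕ) (x : ℝ) : ℝ :=
  if j % 2 = 1 then jacobiMonic a b j x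
  else 2 ^ (3 * j) * (Nat.factorial (j / 2)) *
    (Real.Gamma (a / 2 + b / 2 + (j / 2 : ℕ) + 1) * Real.Gamma (a / 2 + (j / 2 : ℕ) + 1) *
      Real.Gamma (b / 2 + (j / 2 : ℕ) + 1) / Real.Gamma (a + b + 2 * (j : ℝ) + 2)) *
    ∑ i ∈ range (j / 2 + 1),
      (Real.Gamma (a + b + 4 * (i : ℝ) + 2) /
        ((Nat.factorial i) * 2 ^ (6 * i) * Real.Gamma (a / 2 + b / 2 + (i : ℝ) + 1) *
          Real.Gamma (a / 2 + (i : ℝ) + 1) * Real.Gamma (b / 2 + (i : ℝ) + 1)))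
        * jacobiMonic a b (2 * i) x

/-- The normalizations `r̃_m`. -/
noncomputable def rJSE (a b : ℝ) (m : ℕ) : ℝ :=
  2 ^ (a + b + 4 * (m : ℝ) + 2) * Real.Gamma (2 * (m : ℝ) + 2) *
    Real.Gamma (a + 2 * (m : ℝ) + 2) * Real.Gamma (b + 2 * (m : ℝ) + 2) *
    Real.Gamma (a + b + 2 * (m : ℝ) + 2) /
    (Real.Gamma (a + b + 4 * (m : ℝ) + 2) * Real.Gamma (a + b + 4 * (m : ℝ) + 4))

/-- The Jacobi symplectic ensemble kernel `S̃₄(x,y)`. -/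
noncomputable def S4JSE (a b : ℝ) (N : ℕ) (x y : ℝ) : ℝ :=
  ∑ m ∈ range N, (wJSE a b x / (2 * rJSE a b m)) *
    (qJSE a b (2 * m) x * deriv (fun t => wJSE a b t * qJSE a b (2 * m + 1) t) y -
     qJSE a b (2 * m + 1) x * deriv (fun t => wJSE a b t * qJSE a b (2 * m) t) y)

/-!
Write `w̃ = wJSE a b` and `w(t) = w̃(t) / (1 - t²)`. The operator `D f = w⁻¹ (w̃ f)'` is
skew-symmetric with respect to the Jacobi weight and raises degrees by one, so it sends `p_k` to a
combination of `p_{k+1}` and `p_{k-1}`. The coefficients are found by expanding `p_k` in the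
variables `u = (x-1)/2`, `v = (x+1)/2`, in which `D` acts on monomials and `v - u = 1`. The
polynomials `q̃_{2m}` are precisely the combinations of even `p_k` for which `D q̃_{2m}` is a
multiple of `p_{2m+1}` alone. The terms of the kernel are therefore those of the
Christoffel–Darboux sum plus a telescoping difference, and what remains at the end contains
`w̃ q̃_{2N-2}`, an antiderivative of a multiple of `w p_{2N-1}` which vanishes at `1`.
-/

section BesselClifford

/-- The coefficients `1 / (i! Γ(a+i+1))` of the Bessel–Clifford function, out of which the Jacobi
polynomials are built. -/
noncomputable def cliffordCoeff (a : ℝ) (i : ℕ) : ℝ :=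
  ((Nat.factorial i : ℝ) * Real.Gamma (a + i + 1))⁻¹

/-- The homogeneous form `∑_{i+j=n} g(i,j) uⁱ vʲ / (i! j! Γ(a+i+1) Γ(b+j+1))`. For `g = 1`,
`u = (x-1)/2`, `v = (x+1)/2` it is proportional to the `n`-th Jacobi polynomial; the weight `g` is
a function of real variables so that shifted indices such as `i - 1` make sense. -/
noncomputable def jacobiForm (a b : ℝ) (n : ℕ) (g : ℝ → ℝ → ℝ) (u v : ℝ) : ℝ :=
  ∑ ij ∈ antidiagonal n, g ij.1 ij.2 * (cliffordCoeff a ij.1 * u ^ ij.1) *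
    (cliffordCoeff b ij.2 * v ^ ij.2)

lemma inv_Gamma_eq_mul_inv_Gamma_add_one (z : ℝ) :
    (Real.Gamma z)⁻¹ = z * (Real.Gamma (z + 1))⁻¹ := by
  rcases eq_or_ne z 0 with rfl | hz
  · simp
  · rw [Real.Gamma_add_one hz, mul_inv, mul_inv_cancel_left₀ hz]

lemma cliffordCoeff_eq_mul_succ (a : ℝ) (i : ℕ) :
    cliffordCoeff a i = (i + 1) * (a + (i + 1)) * cliffordCoeff a (i + 1) := by
  have hi : (i : ℝ) + 1 ≠ 0 := i.cast_add_one_ne_zero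
  simp only [cliffordCoeff, mul_inv, Nat.factorial_succ, Nat.cast_mul, Nat.cast_succ]
  rw [inv_Gamma_eq_mul_inv_Gamma_add_one, ← add_assoc a]
  field_simp

/-- The right-hand side has one more term, `i = 0`, which the factor `i` kills. -/
lemma mul_jacobiForm_left (a b : ℝ) (n : ℕ) (g : ℝ → ℝ → ℝ) (u v : ℝ) :
    u * jacobiForm a b n g u v
      = jacobiForm a b (n + 1) (fun i j => i * (a + i) * g (i - 1) j) u v := by
  simp only [jacobiForm, Finset.Nat.sum_antidiagonal_succ, Nat.cast_zero, zero_mul, zero_add,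
    mul_sum]
  refine sum_congr rfl fun ij _ => ?_
  rw [cliffordCoeff_eq_mul_succ a ij.1]
  push_cast
  rw [add_sub_cancel_right, pow_succ]
  ring

lemma mul_jacobiForm_right (a b : ℝ) (n : ℕ) (g : ℝ → ℝ → ℝ) (u v : ℝ) :
    v * jacobiForm a b n g u v
      = jacobiForm a b (n + 1) (fun i j => j * (b + j) * g i (j - 1)) u v := by
  simp only [jacobiForm, Finset.Nat.sum_antidiagonal_succ', Nat.cast_zero, zero_mul, zero_add,
    mul_sum]
  refine sum_congr rfl fun ij _ => ?_
  rw [cliffordCoeff_eq_mul_succ b ij.2]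
  push_cast
  rw [add_sub_cancel_right, pow_succ]
  ring

lemma jacobiForm_congr (a b : ℝ) {n : ℕ} {g g' : ℝ → ℝ → ℝ} (u v : ℝ)
    (h : ∀ i j : ℝ, i + j = n → g i j = g' i j) :
    jacobiForm a b n g u v = jacobiForm a b n g' u v := by
  unfold jacobiForm
  refine sum_congr rfl fun ij hij => ?_
  rw [h ij.1 ij.2 (by exact_mod_cast mem_antidiagonal.mp hij)]

lemma jacobiForm_add (a b : ℝ) (n : ℕ) (g g' : ℝ → ℝ → ℝ) (u v : ℝ) :
    jacobiForm a b n (fun i j => g i j + g' i j) u v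
      = jacobiForm a b n g u v + jacobiForm a b n g' u v := by
  simp only [jacobiForm, add_mul, sum_add_distrib]

lemma jacobiForm_const_mul (a b c : ℝ) (n : ℕ) (g : ℝ → ℝ → ℝ) (u v : ℝ) :
    jacobiForm a b n (fun i j => c * g i j) u v = c * jacobiForm a b n g u v := by
  simp only [jacobiForm, mul_assoc, mul_sum]

/-- The weight describing, up to sign, the action of `jacobiSkewOp` on `jacobiForm a b n 1`. -/
def jacobiSkewWeight (a b i j : ℝ) : ℝ :=
  (2 * i + a + 1) * (j * (b + j)) + (2 * j + b + 1) * (i * (a + i))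

lemma sub_sq_mul_jacobiForm (a b : ℝ) (n : ℕ) (u v : ℝ) :
    (v - u) ^ 2 * jacobiForm a b n 1 u v
      = jacobiForm a b (n + 2) (fun i j => j * (b + j) * ((j - 1) * (b + (j - 1)))
          + (-2 * (i * (a + i) * (j * (b + j)))
            + i * (a + i) * ((i - 1) * (a + (i - 1))))) u v := by
  calc (v - u) ^ 2 * jacobiForm a b n 1 u v
      = v * (v * jacobiForm a b n 1 u v) + (-2 * (u * (v * jacobiForm a b n 1 u v))
          + u * (u * jacobiForm a b n 1 u v)) := by ring
    _ = _ := by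
      simp only [mul_jacobiForm_left, mul_jacobiForm_right, ← jacobiForm_const_mul,
        ← jacobiForm_add, Pi.one_apply, mul_one]

lemma jacobiForm_skewWeight_one (a b u v : ℝ) :
    jacobiForm a b 1 (jacobiSkewWeight a b) u v = (a + 1) * (b + 1) * jacobiForm a b 1 1 u v := by
  simp only [jacobiForm, Finset.Nat.sum_antidiagonal_succ, Finset.Nat.antidiagonal_zero,
    sum_singleton, jacobiSkewWeight, Pi.one_apply, Nat.cast_zero, Nat.cast_one, zero_add]
  ring

lemma jacobiForm_skewWeight_add_two (a b : ℝ) (n : ℕ) (u v : ℝ) :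
    (a + b + 2 * n + 3) * jacobiForm a b (n + 2) (jacobiSkewWeight a b) u v
        + (v - u) ^ 2 * jacobiForm a b n 1 u v
      = (n + 2) * (a + b + n + 2) * (a + n + 2) * (b + n + 2) *
        jacobiForm a b (n + 2) 1 u v := by
  rw [sub_sq_mul_jacobiForm, ← jacobiForm_const_mul, ← jacobiForm_const_mul, ← jacobiForm_add]
  refine jacobiForm_congr a b u v fun i j hij => ?_
  obtain rfl : j = n + 2 - i := by push_cast at hij; linarith
  simp only [jacobiSkewWeight, Pi.one_apply]
  ring

end BesselClifford

section SkewOperator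

/-- The operator `D f = (1-x²) f' + ((b-a)/2 - (a+b+2)/2 · x) f`, which is `f ↦ w⁻¹ (w̃ f)'` for
the weights `w̃ = wJSE a b` and `w = wJSEReduced a b`. -/
noncomputable def jacobiSkewOp (a b : ℝ) (f : ℝ → ℝ) (x : ℝ) : ℝ :=
  (1 - x ^ 2) * deriv f x + ((b - a) / 2 - (a + b + 2) / 2 * x) * f x

lemma jacobiSkewOp_const_mul (a b c : ℝ) (f : ℝ → ℝ) (x : ℝ) :
    jacobiSkewOp a b (fun t => c * f t) x = c * jacobiSkewOp a b f x := by
  simp only [jacobiSkewOp, deriv_const_mul_field]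
  ring

lemma jacobiSkewOp_add (a b : ℝ) {f g : ℝ → ℝ} {x : ℝ} (hf : DifferentiableAt ℝ f x)
    (hg : DifferentiableAt ℝ g x) :
    jacobiSkewOp a b (fun t => f t + g t) x = jacobiSkewOp a b f x + jacobiSkewOp a b g x := by
  simp only [jacobiSkewOp, deriv_fun_add hf hg]
  ring

lemma jacobiSkewOp_sum (a b : ℝ) {ι : Type*} (s : Finset ι) {f : ι → ℝ → ℝ} {x : ℝ}
    (hf : ∀ i ∈ s, DifferentiableAt ℝ (f i) x) :
    jacobiSkewOp a b (fun t => ∑ i ∈ s, f i t) x = ∑ i ∈ s, jacobiSkewOp a b (f i) x := by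
  simp only [jacobiSkewOp, deriv_fun_sum hf, mul_sum, sum_add_distrib]

lemma natCast_mul_pow_sub_one_mul (n : ℕ) (z : ℝ) : n * z ^ (n - 1) * z = n * z ^ n := by
  cases n with
  | zero => simp
  | succ n => rw [Nat.add_sub_cancel, mul_assoc, ← pow_succ]

/-- In the variables `u = (x-1)/2`, `v = (x+1)/2` one has `1 - x² = -4uv` and
`(b-a)/2 - (a+b+2)/2 · x = -((a+1)v + (b+1)u)`. -/
lemma jacobiSkewOp_pow_mul_pow (a b : ℝ) (i j : ℕ) (x : ℝ) :
    jacobiSkewOp a b (fun t => ((t - 1) / 2) ^ i * ((t + 1) / 2) ^ j) x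
      = -((2 * i + a + 1) * ((x + 1) / 2) + (2 * j + b + 1) * ((x - 1) / 2)) *
          (((x - 1) / 2) ^ i * ((x + 1) / 2) ^ j) := by
  have hu : HasDerivAt (fun t : ℝ => ((t - 1) / 2) ^ i) (i * ((x - 1) / 2) ^ (i - 1) * (1 / 2)) x :=
    (((hasDerivAt_id x).sub_const 1).div_const 2).pow i
  have hv : HasDerivAt (fun t : ℝ => ((t + 1) / 2) ^ j) (j * ((x + 1) / 2) ^ (j - 1) * (1 / 2)) x :=
    (((hasDerivAt_id x).add_const 1).div_const 2).pow j
  rw [jacobiSkewOp, (hu.fun_mul hv).deriv]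
  linear_combination
    -(x + 1) * ((x + 1) / 2) ^ j * natCast_mul_pow_sub_one_mul i ((x - 1) / 2)
      - (x - 1) * ((x - 1) / 2) ^ i * natCast_mul_pow_sub_one_mul j ((x + 1) / 2)

lemma jacobiSkewOp_jacobiForm (a b : ℝ) (n : ℕ) (x : ℝ) :
    jacobiSkewOp a b (fun t => jacobiForm a b n 1 ((t - 1) / 2) ((t + 1) / 2)) x
      = -jacobiForm a b (n + 1) (jacobiSkewWeight a b) ((x - 1) / 2) ((x + 1) / 2) := by
  have hterm (ij : ℕ × ℕ) : jacobiSkewOp a b (fun t => (1 : ℝ → ℝ → ℝ) ij.1 ij.2 *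
        (cliffordCoeff a ij.1 * ((t - 1) / 2) ^ ij.1) *
        (cliffordCoeff b ij.2 * ((t + 1) / 2) ^ ij.2)) x
      = cliffordCoeff a ij.1 * cliffordCoeff b ij.2 *
          jacobiSkewOp a b (fun t => ((t - 1) / 2) ^ ij.1 * ((t + 1) / 2) ^ ij.2) x := by
    rw [← jacobiSkewOp_const_mul]
    congr 1
    funext t
    simp only [Pi.one_apply]
    ring
  have hweight : jacobiForm a b (n + 1) (jacobiSkewWeight a b) ((x - 1) / 2) ((x + 1) / 2)
      = (x + 1) / 2 * jacobiForm a b n (fun i _ => 2 * i + a + 1) ((x - 1) / 2) ((x + 1) / 2)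
        + (x - 1) / 2 *
          jacobiForm a b n (fun _ j => 2 * j + b + 1) ((x - 1) / 2) ((x + 1) / 2) := by
    rw [mul_jacobiForm_left, mul_jacobiForm_right, ← jacobiForm_add]
    refine jacobiForm_congr a b _ _ fun i j _ => ?_
    rw [jacobiSkewWeight]
    ring
  rw [hweight]
  simp only [jacobiForm]
  rw [jacobiSkewOp_sum a b _ fun ij _ => by fun_prop]
  simp only [hterm, jacobiSkewOp_pow_mul_pow, mul_sum, ← sum_add_distrib, ← sum_neg_distrib]
  exact sum_congr rfl fun ij _ => by ring

end SkewOperator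

section MonicJacobi

/-- The factor relating the monic Jacobi polynomial `p_n` to `jacobiForm a b n 1`. -/
noncomputable def jacobiScale (a b : ℝ) (n : ℕ) : ℝ :=
  2 ^ n * (Nat.factorial n) * Real.Gamma (a + b + n + 1) / Real.Gamma (a + b + 2 * n + 1) *
    (Real.Gamma (a + n + 1) * Real.Gamma (b + n + 1))

/-- The coefficient `c_k = k + (a+b+2)/2` by which `-D` sends `p_k` to `p_{k+1}`, to leading
order. -/
noncomputable def jacobiSkewCoeff (a b : ℝ) (k : ℕ) : ℝ := k + (a + b + 2) / 2

variable {a b : ℝ}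

lemma jacobiMonic_eq_jacobiForm (a b : ℝ) (n : ℕ) (x : ℝ) :
    jacobiMonic a b n x
      = jacobiScale a b n * jacobiForm a b n 1 ((x - 1) / 2) ((x + 1) / 2) := by
  rw [jacobiMonic, jacobiP, jacobiScale, jacobiForm, Finset.Nat.sum_antidiagonal_eq_sum_range_succ
    fun i j => (1 : ℝ → ℝ → ℝ) i j * (cliffordCoeff a i * ((x - 1) / 2) ^ i) *
      (cliffordCoeff b j * ((x + 1) / 2) ^ j)]
  simp only [mul_sum]
  refine sum_congr rfl fun s hs => ?_
  have hsn : s ≤ n := Nat.lt_succ_iff.mp (mem_range.mp hs)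
  simp only [cliffordCoeff, Pi.one_apply, Nat.cast_sub hsn, ← add_sub_assoc, add_comm (n : ℝ)]
  ring

lemma differentiable_jacobiMonic (a b : ℝ) (k : ℕ) : Differentiable ℝ (jacobiMonic a b k) := by
  unfold jacobiMonic jacobiP
  fun_prop

lemma add_natCast_add_one_ne_zero (ha : -1 < a) (hb : -1 < b) (hab : a + b ≠ -1) (k : ℕ) :
    a + b + k + 1 ≠ 0 := by
  rcases k.eq_zero_or_pos with rfl | hk
  · exact fun h => hab (by simpa using eq_neg_of_add_eq_zero_left h)
  · have : (1 : ℝ) ≤ k := by exact_mod_cast hk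
    linarith

lemma Gamma_add_natCast_add_one_ne_zero (ha : -1 < a) (hb : -1 < b) (hab : a + b ≠ -1) (k : ℕ) :
    Real.Gamma (a + b + k + 1) ≠ 0 :=
  Real.Gamma_ne_zero fun m hm => add_natCast_add_one_ne_zero ha hb hab (k + m)
    (by push_cast; linarith)

lemma Gamma_add_natCast_add_one_pos (ha : -1 < a) (k : ℕ) : 0 < Real.Gamma (a + k + 1) :=
  Real.Gamma_pos_of_pos (by linarith [k.cast_nonneg (α := ℝ)])

lemma jacobiSkewCoeff_pos (ha : -1 < a) (hb : -1 < b) (k : ℕ) : 0 < jacobiSkewCoeff a b k := by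
  rw [jacobiSkewCoeff]
  linarith [k.cast_nonneg (α := ℝ)]

lemma jacobiScale_ne_zero (ha : -1 < a) (hb : -1 < b) (hab : a + b ≠ -1) (k : ℕ) :
    jacobiScale a b k ≠ 0 := by
  have hΓnum := Gamma_add_natCast_add_one_ne_zero ha hb hab k
  have hΓden := Gamma_add_natCast_add_one_ne_zero ha hb hab (2 * k)
  have hΓa := (Gamma_add_natCast_add_one_pos ha k).ne'
  have hΓb := (Gamma_add_natCast_add_one_pos hb k).ne'
  push_cast at hΓden
  rw [jacobiScale]
  positivity

lemma jacobiNorm_eq_jacobiScale (a b : ℝ) (k : ℕ) :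
    jacobiNorm a b k
      = 2 ^ (a + b + k + 1) / Real.Gamma (a + b + 2 * k + 2) * jacobiScale a b k := by
  have hpow : (2 : ℝ) ^ (a + b + 1 + 2 * (k : ℝ)) = 2 ^ (a + b + k + 1) * 2 ^ k := by
    rw [← Real.rpow_add_natCast two_ne_zero]
    ring_nf
  rw [jacobiNorm, jacobiScale, hpow, Real.Gamma_nat_eq_factorial]
  ring

lemma jacobiNorm_ne_zero (ha : -1 < a) (hb : -1 < b) (hab : a + b ≠ -1) (k : ℕ) :
    jacobiNorm a b k ≠ 0 := by
  have hΓ : 0 < Real.Gamma (a + b + 2 * k + 2) :=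
    Real.Gamma_pos_of_pos (by linarith [k.cast_nonneg (α := ℝ)])
  have hscale := jacobiScale_ne_zero ha hb hab k
  rw [jacobiNorm_eq_jacobiScale]
  positivity

lemma jacobiSkewCoeff_mul_jacobiScale_succ (ha : -1 < a) (hb : -1 < b) (hab : a + b ≠ -1)
    (n : ℕ) :
    (a + b + 2 * n + 1) * jacobiSkewCoeff a b n * jacobiScale a b (n + 1)
      = (n + 1) * (a + b + n + 1) * (a + n + 1) * (b + n + 1) * jacobiScale a b n := by
  have hΓab : Real.Gamma (a + b + (n + 1 : ℕ) + 1)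
      = (a + b + n + 1) * Real.Gamma (a + b + n + 1) := by
    rw [← Real.Gamma_add_one (add_natCast_add_one_ne_zero ha hb hab n)]
    push_cast
    ring_nf
  have hΓ (c : ℝ) (hc : -1 < c) :
      Real.Gamma (c + (n + 1 : ℕ) + 1) = (c + n + 1) * Real.Gamma (c + n + 1) := by
    rw [← Real.Gamma_add_one (by linarith [n.cast_nonneg (α := ℝ)])]
    push_cast
    ring_nf
  have hΓinv : (Real.Gamma (a + b + 2 * n + 1))⁻¹ = (a + b + 2 * n + 1) *
      ((a + b + 2 * n + 2) * (Real.Gamma (a + b + 2 * (n + 1 : ℕ) + 1))⁻¹) := by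
    rw [inv_Gamma_eq_mul_inv_Gamma_add_one, inv_Gamma_eq_mul_inv_Gamma_add_one (_ + 1 + 1)]
    push_cast
    ring_nf
  simp only [jacobiScale, jacobiSkewCoeff, hΓab, hΓ a ha, hΓ b hb, div_eq_mul_inv, hΓinv,
    Nat.factorial_succ]
  push_cast
  ring

lemma jacobiSkewCoeff_mul_jacobiNorm_succ (a b : ℝ) (n : ℕ) :
    (a + b + 2 * n + 3) * jacobiSkewCoeff a b n * jacobiScale a b n * jacobiNorm a b (n + 1)
      = jacobiScale a b (n + 1) * jacobiNorm a b n := by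
  have hpow : (2 : ℝ) ^ (a + b + (n + 1 : ℕ) + 1) = 2 ^ (a + b + n + 1) * 2 := by
    rw [← Real.rpow_add_one two_ne_zero, Nat.cast_succ, ← add_assoc]
  have hΓinv : (Real.Gamma (a + b + 2 * n + 2))⁻¹ = (a + b + 2 * n + 2) *
      ((a + b + 2 * n + 3) * (Real.Gamma (a + b + 2 * (n + 1 : ℕ) + 2))⁻¹) := by
    rw [inv_Gamma_eq_mul_inv_Gamma_add_one, inv_Gamma_eq_mul_inv_Gamma_add_one (_ + 2 + 1)]
    push_cast
    ring_nf
  simp only [jacobiNorm_eq_jacobiScale, hpow, div_eq_mul_inv, hΓinv, jacobiSkewCoeff]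
  ring

lemma jacobiSkewCoeff_sq_mul_jacobiNorm_succ (ha : -1 < a) (hb : -1 < b) (hab : a + b ≠ -1)
    (n : ℕ) :
    (a + b + 2 * n + 1) * (a + b + 2 * n + 3) * jacobiSkewCoeff a b n ^ 2 *
        jacobiNorm a b (n + 1)
      = (n + 1) * (a + b + n + 1) * (a + n + 1) * (b + n + 1) * jacobiNorm a b n := by
  apply mul_left_cancel₀ (jacobiScale_ne_zero ha hb hab n)
  linear_combination
    (a + b + 2 * n + 1) * jacobiSkewCoeff a b n * jacobiSkewCoeff_mul_jacobiNorm_succ a b n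
      + jacobiNorm a b n * jacobiSkewCoeff_mul_jacobiScale_succ ha hb hab n

lemma jacobiSkewOp_jacobiMonic (a b : ℝ) (n : ℕ) (x : ℝ) :
    jacobiSkewOp a b (jacobiMonic a b n) x
      = -(jacobiScale a b n *
          jacobiForm a b (n + 1) (jacobiSkewWeight a b) ((x - 1) / 2) ((x + 1) / 2)) := by
  rw [funext (jacobiMonic_eq_jacobiForm a b n), jacobiSkewOp_const_mul, jacobiSkewOp_jacobiForm,
    mul_neg]

lemma jacobiSkewOp_jacobiMonic_zero (ha : -1 < a) (hb : -1 < b) (hab : a + b ≠ -1) (x : ℝ) :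
    jacobiSkewOp a b (jacobiMonic a b 0) x
      = -(jacobiSkewCoeff a b 0 * jacobiMonic a b 1 x) := by
  have hscale := jacobiSkewCoeff_mul_jacobiScale_succ ha hb hab 0
  have hne : a + b + 1 ≠ 0 := by simpa using add_natCast_add_one_ne_zero ha hb hab 0
  rw [jacobiSkewOp_jacobiMonic, zero_add, jacobiForm_skewWeight_one, jacobiMonic_eq_jacobiForm]
  simp only [Nat.cast_zero, mul_zero, add_zero, zero_add, one_mul] at hscale
  apply mul_left_cancel₀ hne
  linear_combination jacobiForm a b 1 1 ((x - 1) / 2) ((x + 1) / 2) * hscale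

/-- Together with `jacobiSkewOp_jacobiMonic_zero`, this says that `D` is tridiagonal with zero
diagonal in the basis `p_k`, and skew-symmetric for the inner product with `⟨p_k, p_k⟩ = h_k`. -/
lemma jacobiSkewOp_jacobiMonic_succ (ha : -1 < a) (hb : -1 < b) (hab : a + b ≠ -1) (k : ℕ)
    (x : ℝ) :
    jacobiSkewOp a b (jacobiMonic a b (k + 1)) x
      = -(jacobiSkewCoeff a b (k + 1) * jacobiMonic a b (k + 2) x)
        + jacobiSkewCoeff a b k * jacobiNorm a b (k + 1) / jacobiNorm a b k *
          jacobiMonic a b k x := by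
  have hscale := jacobiSkewCoeff_mul_jacobiScale_succ ha hb hab (k + 1)
  have hnorm := jacobiSkewCoeff_mul_jacobiNorm_succ a b k
  have hform := jacobiForm_skewWeight_add_two a b k ((x - 1) / 2) ((x + 1) / 2)
  have hne : a + b + 2 * k + 3 ≠ 0 := by linarith [k.cast_nonneg (α := ℝ)]
  have hh := jacobiNorm_ne_zero ha hb hab k
  rw [jacobiSkewOp_jacobiMonic, jacobiMonic_eq_jacobiForm, jacobiMonic_eq_jacobiForm]
  generalize jacobiForm a b (k + 2) 1 _ _ = F₂, jacobiForm a b k 1 _ _ = F₀ at hform ⊢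
  push_cast at hscale
  rw [show (x + 1) / 2 - (x - 1) / 2 = 1 by ring] at hform
  field_simp
  apply mul_left_cancel₀ hne
  linear_combination -jacobiNorm a b k * jacobiScale a b (k + 1) * hform
    + jacobiNorm a b k * F₂ * hscale - F₀ * hnorm

end MonicJacobi

section SkewOrthogonal

/-- The coefficients of `p_{2i}` in the sum defining `qJSE a b (2 * m)`, before its normalization
by the value at `i = m`. -/
noncomputable def qJSECoeff (a b : ℝ) (i : ℕ) : ℝ :=
  Real.Gamma (a + b + 4 * i + 2) /
    ((Nat.factorial i) * 2 ^ (6 * i) * Real.Gamma (a / 2 + b / 2 + i + 1) *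
      Real.Gamma (a / 2 + i + 1) * Real.Gamma (b / 2 + i + 1))

variable {a b : ℝ}

lemma qJSECoeff_ne_zero (ha : -1 < a) (hb : -1 < b) (i : ℕ) : qJSECoeff a b i ≠ 0 := by
  have hi : (0 : ℝ) ≤ i := i.cast_nonneg
  have hΓnum : 0 < Real.Gamma (a + b + 4 * i + 2) := Real.Gamma_pos_of_pos (by linarith [hi])
  have hΓab : 0 < Real.Gamma (a / 2 + b / 2 + i + 1) := Real.Gamma_pos_of_pos (by linarith)
  have hΓa : 0 < Real.Gamma (a / 2 + i + 1) := Real.Gamma_pos_of_pos (by linarith)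
  have hΓb : 0 < Real.Gamma (b / 2 + i + 1) := Real.Gamma_pos_of_pos (by linarith)
  rw [qJSECoeff]
  positivity

lemma Gamma_add_four {z : ℝ} (hz : 0 < z) :
    Real.Gamma (z + 4) = z * (z + 1) * (z + 2) * (z + 3) * Real.Gamma z := by
  rw [show z + 4 = z + 1 + 1 + 1 + 1 by ring, Real.Gamma_add_one (by positivity),
    Real.Gamma_add_one (by positivity), Real.Gamma_add_one (by positivity),
    Real.Gamma_add_one hz.ne']
  ring

lemma qJSECoeff_succ (ha : -1 < a) (hb : -1 < b) (m : ℕ) :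
    64 * ((m + 1) * (a / 2 + b / 2 + m + 1) * (a / 2 + m + 1) * (b / 2 + m + 1)) *
        qJSECoeff a b (m + 1)
      = (a + b + 4 * m + 2) * (a + b + 4 * m + 3) * (a + b + 4 * m + 4) * (a + b + 4 * m + 5) *
        qJSECoeff a b m := by
  have hΓ : Real.Gamma (a + b + 4 * (m + 1 : ℕ) + 2) = (a + b + 4 * m + 2) *
      (a + b + 4 * m + 3) * (a + b + 4 * m + 4) * (a + b + 4 * m + 5) *
      Real.Gamma (a + b + 4 * m + 2) := by
    rw [show a + b + 4 * ((m + 1 : ℕ) : ℝ) + 2 = a + b + 4 * m + 2 + 4 by push_cast; ring,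
      Gamma_add_four (by linarith [m.cast_nonneg (α := ℝ)])]
    ring
  have hΓinv (c : ℝ) : (Real.Gamma (c + m + 1))⁻¹
      = (c + m + 1) * (Real.Gamma (c + (m + 1 : ℕ) + 1))⁻¹ := by
    rw [inv_Gamma_eq_mul_inv_Gamma_add_one, Nat.cast_succ, ← add_assoc c]
  have hfact : ((Nat.factorial m : ℕ) : ℝ)⁻¹ = (m + 1) * ((Nat.factorial (m + 1) : ℕ) : ℝ)⁻¹ := by
    rw [Nat.factorial_succ]
    push_cast
    field_simp
  simp only [qJSECoeff, div_eq_mul_inv, mul_inv, hΓ, hΓinv, hfact, mul_add_one 6 m, pow_add]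
  ring

lemma qJSECoeff_mul_jacobiNorm_succ (ha : -1 < a) (hb : -1 < b) (hab : a + b ≠ -1) (m : ℕ) :
    qJSECoeff a b (m + 1) * (jacobiSkewCoeff a b (2 * m + 1) * jacobiNorm a b (2 * m + 2))
      = qJSECoeff a b m * (jacobiSkewCoeff a b (2 * m) * jacobiNorm a b (2 * m + 1)) := by
  have hm : (0 : ℝ) ≤ m := m.cast_nonneg
  have hcoeff := qJSECoeff_succ ha hb m
  have hnorm := jacobiSkewCoeff_sq_mul_jacobiNorm_succ ha hb hab (2 * m + 1)
  have hne : (a + b + 4 * m + 3) * (a + b + 4 * m + 4) * (a + b + 4 * m + 5) ≠ 0 := by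
    have h₃ : 0 < a + b + 4 * m + 3 := by linarith [hm]
    have h₄ : 0 < a + b + 4 * m + 4 := by linarith
    have h₅ : 0 < a + b + 4 * m + 5 := by linarith
    positivity
  apply mul_left_cancel₀ hne
  simp only [jacobiSkewCoeff] at hnorm ⊢
  push_cast at hnorm ⊢
  linear_combination 2 * qJSECoeff a b (m + 1) * hnorm
    + jacobiNorm a b (2 * m + 1) / 2 * hcoeff

lemma qJSE_two_mul_add_one (a b : ℝ) (m : ℕ) :
    qJSE a b (2 * m + 1) = jacobiMonic a b (2 * m + 1) := by
  funext x
  rw [qJSE, if_pos (by omega)]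

lemma qJSE_two_mul (a b : ℝ) (m : ℕ) (x : ℝ) :
    qJSE a b (2 * m) x
      = (qJSECoeff a b m)⁻¹ *
        ∑ i ∈ range (m + 1), qJSECoeff a b i * jacobiMonic a b (2 * i) x := by
  have hhalf : 2 * m / 2 = m := by omega
  have hfour : 2 * ((2 * m : ℕ) : ℝ) = 4 * m := by
    push_cast
    ring
  rw [qJSE, if_neg (by omega), hhalf, hfour, show 3 * (2 * m) = 6 * m by ring]
  simp only [qJSECoeff, inv_div]
  ring

lemma qJSE_zero (ha : -1 < a) (hb : -1 < b) : qJSE a b 0 = jacobiMonic a b 0 := by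
  funext x
  have hsum := qJSE_two_mul a b 0 x
  simpa [qJSECoeff_ne_zero ha hb 0] using hsum

lemma qJSE_two_mul_add_two (ha : -1 < a) (hb : -1 < b) (hab : a + b ≠ -1) (m : ℕ) (x : ℝ) :
    qJSE a b (2 * (m + 1)) x
      = jacobiMonic a b (2 * m + 2) x
        + jacobiSkewCoeff a b (2 * m + 1) * jacobiNorm a b (2 * m + 2) /
            (jacobiSkewCoeff a b (2 * m) * jacobiNorm a b (2 * m + 1)) *
          qJSE a b (2 * m) x := by
  have hratio := qJSECoeff_mul_jacobiNorm_succ ha hb hab m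
  have hq := qJSECoeff_ne_zero ha hb m
  have hq' := qJSECoeff_ne_zero ha hb (m + 1)
  have hc := (jacobiSkewCoeff_pos ha hb (2 * m)).ne'
  have hh := jacobiNorm_ne_zero ha hb hab (2 * m + 1)
  rw [qJSE_two_mul, qJSE_two_mul, sum_range_succ _ (m + 1), mul_add_one 2 m]
  field_simp
  linear_combination
    -(∑ i ∈ range (m + 1), qJSECoeff a b i * jacobiMonic a b (2 * i) x) * hratio

lemma contDiff_qJSE (a b : ℝ) (k : ℕ) : ContDiff ℝ 1 (qJSE a b k) := by
  unfold qJSE jacobiMonic jacobiP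
  split_ifs <;> fun_prop

lemma jacobiSkewOp_qJSE_two_mul (ha : -1 < a) (hb : -1 < b) (hab : a + b ≠ -1) (m : ℕ) (x : ℝ) :
    jacobiSkewOp a b (qJSE a b (2 * m)) x
      = -(jacobiSkewCoeff a b (2 * m) * jacobiMonic a b (2 * m + 1) x) := by
  induction m with
  | zero => rw [mul_zero, qJSE_zero ha hb, jacobiSkewOp_jacobiMonic_zero ha hb hab]
  | succ m ih =>
    have hc := (jacobiSkewCoeff_pos ha hb (2 * m)).ne'
    have hh := jacobiNorm_ne_zero ha hb hab (2 * m + 1)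
    have hq : DifferentiableAt ℝ (qJSE a b (2 * m)) x :=
      (contDiff_qJSE a b _).differentiable one_ne_zero x
    rw [funext (qJSE_two_mul_add_two ha hb hab m), jacobiSkewOp_add a b
      (differentiable_jacobiMonic a b _ x) (hq.const_mul _), jacobiSkewOp_const_mul, ih,
      jacobiSkewOp_jacobiMonic_succ ha hb hab, mul_add_one 2 m]
    field_simp
    ring

lemma rJSE_eq (a b : ℝ) (m : ℕ) :
    rJSE a b m = jacobiSkewCoeff a b (2 * m) * jacobiNorm a b (2 * m + 1) := by
  have hpow : (2 : ℝ) ^ (a + b + 1 + 2 * ((2 * m + 1 : ℕ) : ℝ)) = 2 ^ (a + b + 4 * m + 2) * 2 := by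
    rw [← Real.rpow_add_one two_ne_zero]
    push_cast
    ring_nf
  have hΓinv : (Real.Gamma (a + b + 4 * m + 2))⁻¹
      = (a + b + 4 * m + 2) * (Real.Gamma (a + b + 2 * (2 * m + 1 : ℕ) + 1))⁻¹ := by
    rw [inv_Gamma_eq_mul_inv_Gamma_add_one]
    push_cast
    ring_nf
  rw [rJSE, jacobiNorm, hpow, jacobiSkewCoeff]
  simp only [div_eq_mul_inv, mul_inv, hΓinv]
  push_cast
  ring_nf

end SkewOrthogonal

section Weight

/-- The weight `w(t) = (1-t)^((a-1)/2) (1+t)^((b-1)/2) = w̃(t) / (1-t²)`. -/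
noncomputable def wJSEReduced (a b t : ℝ) : ℝ :=
  (1 - t) ^ ((a - 1) / 2) * (1 + t) ^ ((b - 1) / 2)

lemma hasDerivAt_wJSE_mul (a b : ℝ) {f : ℝ → ℝ} {t : ℝ} (ht : t ∈ Set.Ioo (-1 : ℝ) 1)
    (hf : DifferentiableAt ℝ f t) :
    HasDerivAt (fun s => wJSE a b s * f s) (wJSEReduced a b t * jacobiSkewOp a b f t) t := by
  have hminus : 0 < 1 - t := sub_pos.mpr ht.2
  have hplus : 0 < 1 + t := by linarith [ht.1]
  have hdminus : HasDerivAt (fun s : ℝ => (1 - s) ^ ((a + 1) / 2)) _ t :=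
    ((hasDerivAt_id t).const_sub 1).rpow_const (Or.inl hminus.ne')
  have hdplus : HasDerivAt (fun s : ℝ => (1 + s) ^ ((b + 1) / 2)) _ t :=
    ((hasDerivAt_id t).const_add 1).rpow_const (Or.inl hplus.ne')
  refine ((hdminus.mul hdplus).mul hf.hasDerivAt).congr_deriv ?_
  simp only [id, Pi.mul_apply, wJSEReduced, jacobiSkewOp]
  rw [show (a + 1) / 2 - 1 = (a - 1) / 2 by ring, show (b + 1) / 2 - 1 = (b - 1) / 2 by ring,
    show (a + 1) / 2 = (a - 1) / 2 + 1 by ring, show (b + 1) / 2 = (b - 1) / 2 + 1 by ring,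
    Real.rpow_add_one hminus.ne', Real.rpow_add_one hplus.ne']
  ring

lemma intervalIntegrable_wJSEReduced {a : ℝ} (ha : -1 < a) (b : ℝ) {x : ℝ}
    (hx : x ∈ Set.Ioo (-1 : ℝ) 1) : IntervalIntegrable (wJSEReduced a b) volume x 1 := by
  have hminus : IntervalIntegrable (fun t : ℝ => (1 - t) ^ ((a - 1) / 2)) volume x 1 := by
    simpa using (intervalIntegral.intervalIntegrable_rpow' (a := 1 - x) (b := 0)
      (r := (a - 1) / 2) (by linarith)).comp_sub_left 1
  refine hminus.mul_continuousOn
    (ContinuousOn.rpow_const (by fun_prop) fun t ht => Or.inl (ne_of_gt ?_))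
  rw [Set.uIcc_of_le hx.2.le] at ht
  linarith [hx.1, ht.1]

lemma continuousOn_wJSE {a : ℝ} (ha : -1 < a) (b : ℝ) {x : ℝ} (hx : -1 < x) :
    ContinuousOn (wJSE a b) (Set.Icc x 1) :=
  (ContinuousOn.rpow_const (by fun_prop) fun _ _ => Or.inr (by linarith)).mul
    (ContinuousOn.rpow_const (by fun_prop) fun _ ht => Or.inl (by linarith [ht.1]))

lemma wJSE_one {a : ℝ} (ha : a ≠ -1) (b : ℝ) : wJSE a b 1 = 0 := by
  have hexp : (a + 1) / 2 ≠ 0 := div_ne_zero (by rwa [Ne, add_eq_zero_iff_eq_neg]) two_ne_zero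
  rw [wJSE, sub_self, Real.zero_rpow hexp, zero_mul]

lemma integral_wJSEReduced_mul_jacobiSkewOp {a : ℝ} (ha : -1 < a) (b : ℝ) {f : ℝ → ℝ}
    (hf : ContDiff ℝ 1 f) {x : ℝ} (hx : x ∈ Set.Ioo (-1 : ℝ) 1) :
    ∫ t in Set.Ioo x 1, wJSEReduced a b t * jacobiSkewOp a b f t = -(wJSE a b x * f x) := by
  have hD : Continuous (jacobiSkewOp a b f) := by
    have := hf.continuous_deriv_one
    unfold jacobiSkewOp
    fun_prop
  rw [← integral_Ioc_eq_integral_Ioo, ← intervalIntegral.integral_of_le hx.2.le,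
    intervalIntegral.integral_eq_sub_of_hasDerivAt_of_le hx.2.le
      ((continuousOn_wJSE ha b hx.1).mul hf.continuous.continuousOn)
      (fun t ht => hasDerivAt_wJSE_mul a b ⟨hx.1.trans ht.1, ht.2⟩
        (hf.differentiable one_ne_zero t))
      ((intervalIntegrable_wJSEReduced ha b hx).mul_continuousOn hD.continuousOn),
    Pi.mul_apply, Pi.mul_apply, wJSE_one ha.ne', zero_mul, zero_sub]

end Weight

section Kernel

/-- A Christoffel–Darboux type summation: the hypothesis on `Q` makes the term of index `m` equal
to `X_{2m} Y_{2m} / h_{2m} + X_{2m+1} Y_{2m+1} / h_{2m+1}` plus a telescoping difference. -/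
lemma sum_range_skew_telescope {K : Type*} [Field K] {c h X Y Q : ℕ → K} (hc : ∀ k, c k ≠ 0)
    (hh : ∀ k, h k ≠ 0) (hQ₀ : Q 0 = X 0)
    (hQ : ∀ m, Q (m + 1) = X (2 * m + 2)
      + c (2 * m + 1) * h (2 * m + 2) / (c (2 * m) * h (2 * m + 1)) * Q m) (N : ℕ) :
    ∑ m ∈ range (N + 1),
        (Q m * (-(c (2 * m + 1) * Y (2 * m + 2))
            + c (2 * m) * h (2 * m + 1) / h (2 * m) * Y (2 * m))
          - X (2 * m + 1) * -(c (2 * m) * Y (2 * m + 1))) / (c (2 * m) * h (2 * m + 1))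
      = ∑ l ∈ range (2 * (N + 1)), X l * Y l / h l
        - c (2 * N + 1) / (c (2 * N) * h (2 * N + 1)) * Q N * Y (2 * N + 2) := by
  induction N with
  | zero =>
    have hc₀ := hc 0
    have hh₀ := hh 0
    have hh₁ := hh 1
    simp only [zero_add, sum_range_succ, range_zero, sum_empty, mul_zero, mul_one, hQ₀]
    field_simp
    ring
  | succ N ih =>
    have hc₀ := hc (2 * N)
    have hc₂ := hc (2 * N + 2)
    have hh₁ := hh (2 * N + 1)
    have hh₂ := hh (2 * N + 2)
    have hh₃ := hh (2 * N + 3)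
    rw [sum_range_succ, ih, mul_add_one 2 (N + 1), sum_range_succ _ (2 * (N + 1) + 1),
      sum_range_succ _ (2 * (N + 1)), hQ, mul_add_one 2 N]
    field_simp
    ring

variable {a b : ℝ}

lemma S4JSE_eq_sum_jacobiSkewOp (a b : ℝ) (N : ℕ) (x : ℝ) {y : ℝ}
    (hy : y ∈ Set.Ioo (-1 : ℝ) 1) :
    S4JSE a b N x y = 1 / 2 * wJSE a b x * wJSEReduced a b y * ∑ m ∈ range N,
      (qJSE a b (2 * m) x * jacobiSkewOp a b (jacobiMonic a b (2 * m + 1)) y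
        - jacobiMonic a b (2 * m + 1) x * jacobiSkewOp a b (qJSE a b (2 * m)) y) /
        (jacobiSkewCoeff a b (2 * m) * jacobiNorm a b (2 * m + 1)) := by
  have hderiv (k : ℕ) : deriv (fun t => wJSE a b t * qJSE a b k t) y
      = wJSEReduced a b y * jacobiSkewOp a b (qJSE a b k) y :=
    (hasDerivAt_wJSE_mul a b hy ((contDiff_qJSE a b k).differentiable one_ne_zero y)).deriv
  rw [S4JSE, mul_sum]
  refine sum_congr rfl fun m _ => ?_
  rw [hderiv, hderiv, qJSE_two_mul_add_one, rJSE_eq]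
  ring

lemma S4JSE_succ_eq (ha : -1 < a) (hb : -1 < b) (hab : a + b ≠ -1) (N : ℕ) (x : ℝ) {y : ℝ}
    (hy : y ∈ Set.Ioo (-1 : ℝ) 1) :
    S4JSE a b (N + 1) x y = 1 / 2 * wJSE a b x * wJSEReduced a b y *
      (∑ l ∈ range (2 * (N + 1)), jacobiMonic a b l x * jacobiMonic a b l y / jacobiNorm a b l
        - jacobiSkewCoeff a b (2 * N + 1) /
            (jacobiSkewCoeff a b (2 * N) * jacobiNorm a b (2 * N + 1)) *
          qJSE a b (2 * N) x * jacobiMonic a b (2 * N + 2) y) := by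
  simp only [S4JSE_eq_sum_jacobiSkewOp a b _ x hy, jacobiSkewOp_jacobiMonic_succ ha hb hab,
    jacobiSkewOp_qJSE_two_mul ha hb hab]
  rw [sum_range_skew_telescope (X := fun l => jacobiMonic a b l x)
    (Y := fun l => jacobiMonic a b l y) (fun k => (jacobiSkewCoeff_pos ha hb k).ne')
    (jacobiNorm_ne_zero ha hb hab) (congrFun (qJSE_zero ha hb) x)
    (qJSE_two_mul_add_two ha hb hab · x)]

lemma jacobiSkewCoeff_mul_integral (ha : -1 < a) (hb : -1 < b) (hab : a + b ≠ -1) (m : ℕ)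
    {x : ℝ} (hx : x ∈ Set.Ioo (-1 : ℝ) 1) :
    jacobiSkewCoeff a b (2 * m) *
        ∫ t in Set.Ioo x 1, wJSEReduced a b t * jacobiMonic a b (2 * m + 1) t
      = wJSE a b x * qJSE a b (2 * m) x := by
  have hint := integral_wJSEReduced_mul_jacobiSkewOp ha b (contDiff_qJSE a b (2 * m)) hx
  simp only [jacobiSkewOp_qJSE_two_mul ha hb hab, mul_neg, mul_left_comm (wJSEReduced a b _),
    integral_neg, integral_const_mul] at hint
  exact neg_injective hint

end Kernel

theorem jse_kernel_summation_general {a b : ℝ} (ha : -1 < a) (hb : -1 < b) (hab : a + b ≠ -1)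
    {N : ℕ} (hN : 1 ≤ N) {x y : ℝ} (hx : x ∈ Set.Ioo (-1 : ℝ) 1) (hy : y ∈ Set.Ioo (-1 : ℝ) 1) :
    S4JSE a b N x y
      = (1 / 2) * (1 - x) ^ ((a + 1) / 2) * (1 + x) ^ ((b + 1) / 2) *
          (1 - y) ^ ((a - 1) / 2) * (1 + y) ^ ((b - 1) / 2) *
          ∑ l ∈ range (2 * N), jacobiMonic a b l x * jacobiMonic a b l y / jacobiNorm a b l
        - ((4 * (N : ℝ) + a + b) / (4 * jacobiNorm a b (2 * N - 1))) *
            ((1 - y) ^ ((a - 1) / 2) * (1 + y) ^ ((b - 1) / 2)) * jacobiMonic a b (2 * N) y *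
            ∫ t in Set.Ioo x 1,
              (1 - t) ^ ((a - 1) / 2) * (1 + t) ^ ((b - 1) / 2) *
                jacobiMonic a b (2 * N - 1) t := by
  obtain ⟨M, rfl⟩ := Nat.exists_eq_add_of_le' hN
  have hintegral := jacobiSkewCoeff_mul_integral ha hb hab M hx
  have hsum := S4JSE_succ_eq ha hb hab M x hy
  have hcoeff : 4 * ((M + 1 : ℕ) : ℝ) + a + b = 2 * jacobiSkewCoeff a b (2 * M + 1) := by
    rw [jacobiSkewCoeff]
    push_cast
    ring
  have hc := (jacobiSkewCoeff_pos ha hb (2 * M)).ne'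
  have hh := jacobiNorm_ne_zero ha hb hab (2 * M + 1)
  rw [hcoeff, mul_add_one 2 M, show 2 * M + 2 - 1 = 2 * M + 1 by rfl]
  simp only [wJSE, wJSEReduced, mul_add_one 2 M] at hintegral hsum
  rw [hsum]
  field_simp
  linear_combination 4 * (1 - y) ^ ((a - 1) / 2) * (1 + y) ^ ((b - 1) / 2) *
    jacobiSkewCoeff a b (2 * M + 1) * jacobiMonic a b (2 * M + 2) y * hintegral

/-- Closed-form summation of the Jacobi symplectic ensemble kernel `S̃₄(x,y)`. -/
theorem jse_kernel_summation (a b : ℝ) (ha : 0 < a) (hb : 0 < b) (N : ℕ) (hN : 1 ≤ N)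
    (x y : ℝ) (hx : x ∈ Set.Ioo (-1 : ℝ) 1) (hy : y ∈ Set.Ioo (-1 : ℝ) 1) :
    S4JSE a b N x y
      = (1 / 2) * (1 - x) ^ ((a + 1) / 2) * (1 + x) ^ ((b + 1) / 2) *
          (1 - y) ^ ((a - 1) / 2) * (1 + y) ^ ((b - 1) / 2) *
          ∑ l ∈ range (2 * N), jacobiMonic a b l x * jacobiMonic a b l y / jacobiNorm a b l
        - ((4 * (N : ℝ) + a + b) / (4 * jacobiNorm a b (2 * N - 1))) *
            ((1 - y) ^ ((a - 1) / 2) * (1 + y) ^ ((b - 1) / 2)) * jacobiMonic a b (2 * N) y *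
            ∫ t in Set.Ioo x 1,
              (1 - t) ^ ((a - 1) / 2) * (1 + t) ^ ((b - 1) / 2) * jacobiMonic a b (2 * N - 1) t := by
  exact jse_kernel_summation_general (by linarith) (by linarith) (fun h => by linarith) hN hx hy
end

section
/- Let a > 0 be real and let N ≥ 2 be a natural number. Then for every x > 0: x^{a/2} e^{−x/2}·((N−1)!/Γ(a+N))·L_{N−1}^a(x) − (N!/(4Γ(a+N)))·∫_0^∞ sgn(x−u)·u^{a/2−1} e^{−u/2}·L_N^{a−1}(u) du = −((N−1)!/(4Γ(a+N)))·∫_0^∞ sgn(x−u)·u^{a/2} e^{−u/2}·L_{N−2}^{a+1}(u) du. -/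
open MeasureTheory Finset

/-- The generalized Laguerre polynomial `L_n^a`. -/
noncomputable def laguerreL (a : ℝ) (n : ℕ) (x : ℝ) : ℝ :=
  ∑ k ∈ range (n + 1),
    (-1) ^ k * (Real.Gamma ((n : ℝ) + a + 1) /
      (Real.Gamma ((k : ℝ) + a + 1) * (Nat.factorial k) * (Nat.factorial (n - k)))) * x ^ k

/-!
For `s, b > 0` and a polynomial `p`, the function `u ↦ u ^ s * exp (-b u) * p u` vanishes at `0` and
at `∞`, so integrating its derivative against `sgn (x - u)` over `(0, ∞)` returns twice its value at
`x`. Take `s = a / 2`, `b = 1 / 2` and `p = L_n^a`. The two classical identities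
`(a - X) L_n^a + X (L_n^a)' = (n + 1) L_{n+1}^{a-1}` and `(L_n^a)' = -L_{n-1}^{a+1}` turn that
derivative into half the difference of the two integrands of the kernel formulas.
-/

open Polynomial Filter Topology

section Laguerre

-- `Real.Gamma` is `0` at its poles, so the reciprocal form of the functional equation survives
-- there, and the coefficient identities below hold for every real `a`.
lemma inv_gamma_eq_self_mul_inv_gamma_add_one (s : ℝ) :
    (Real.Gamma s)⁻¹ = s * (Real.Gamma (s + 1))⁻¹ := by
  rcases eq_or_ne s 0 with rfl | hs
  · simp
  · rw [Real.Gamma_add_one hs, mul_inv, mul_inv_cancel_left₀ hs]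

/-- The generalized Laguerre polynomial as a formal polynomial. Its coefficients are written with
`n.choose k / n!` in place of `1 / (k! (n - k)!)`, so that they vanish for `k > n`. -/
noncomputable def laguerrePoly (a : ℝ) (n : ℕ) : ℝ[X] :=
  ∑ k ∈ range (n + 1), monomial k
    ((-1) ^ k * (Real.Gamma (n + a + 1) / n.factorial) * (Real.Gamma (k + a + 1))⁻¹ * n.choose k)

lemma coeff_laguerrePoly (a : ℝ) (n k : ℕ) :
    (laguerrePoly a n).coeff k =
      (-1) ^ k * (Real.Gamma (n + a + 1) / n.factorial) * (Real.Gamma (k + a + 1))⁻¹ *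
        n.choose k := by
  simp only [laguerrePoly, finsetSum_coeff, coeff_monomial, sum_ite_eq', mem_range,
    ite_eq_left_iff, not_lt]
  intro hk
  rw [Nat.choose_eq_zero_of_lt hk, Nat.cast_zero, mul_zero]

lemma eval_laguerrePoly (a : ℝ) (n : ℕ) (x : ℝ) : (laguerrePoly a n).eval x = laguerreL a n x := by
  simp only [laguerrePoly, laguerreL, eval_finsetSum, eval_monomial]
  refine sum_congr rfl fun k hk => ?_
  rw [Nat.cast_choose ℝ (Nat.le_of_lt_succ (mem_range.mp hk))]
  have : (n.factorial : ℝ) ≠ 0 := mod_cast n.factorial_ne_zero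
  field_simp

lemma derivative_laguerrePoly_add_one (a : ℝ) (n : ℕ) :
    derivative (laguerrePoly a (n + 1)) = -laguerrePoly (a + 1) n := by
  ext k
  rw [coeff_derivative, coeff_neg, coeff_laguerrePoly, coeff_laguerrePoly, Nat.factorial_succ]
  have hchoose : ((n + 1 : ℕ) : ℝ) * n.choose k = (n + 1).choose (k + 1) * (k + 1) :=
    mod_cast Nat.add_one_mul_choose_eq n k
  have hn : ((n + 1 : ℕ) : ℝ) + a + 1 = n + (a + 1) + 1 := by push_cast; ring
  have hk : ((k + 1 : ℕ) : ℝ) + a + 1 = k + (a + 1) + 1 := by push_cast; ring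
  have : ((n + 1 : ℕ) : ℝ) ≠ 0 := by positivity
  rw [hn, hk, mul_assoc, ← hchoose]
  push_cast at this ⊢
  field_simp
  ring

lemma sub_X_mul_laguerrePoly_add_X_mul_derivative (a : ℝ) (n : ℕ) :
    (C a - X) * laguerrePoly a n + X * derivative (laguerrePoly a n) =
      C (n + 1 : ℝ) * laguerrePoly (a - 1) (n + 1) := by
  have hn : ((n + 1 : ℕ) : ℝ) + (a - 1) + 1 = n + a + 1 := by push_cast; ring
  have hfact : ((n : ℝ) + 1) / (n + 1).factorial = 1 / n.factorial := by
    rw [Nat.factorial_succ]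
    push_cast
    field_simp
  ext k
  rcases k with _ | k
  · have hΓ := inv_gamma_eq_self_mul_inv_gamma_add_one a
    simp only [sub_mul, coeff_add, coeff_sub, coeff_C_mul, coeff_X_mul_zero, coeff_laguerrePoly, hn]
    simp only [Nat.cast_zero, zero_add, Nat.choose_zero_right, sub_add_cancel]
    linear_combination (-Real.Gamma (n + a + 1) * (Real.Gamma a)⁻¹) * hfact
      - Real.Gamma (n + a + 1) / n.factorial * hΓ
  · have hΓ := inv_gamma_eq_self_mul_inv_gamma_add_one (k + a + 1)
    have hk : ((k + 1 : ℕ) : ℝ) + a + 1 = k + a + 1 + 1 := by push_cast; ring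
    have hk' : ((k + 1 : ℕ) : ℝ) + (a - 1) + 1 = k + a + 1 := by push_cast; ring
    have hpascal : ((n + 1).choose (k + 1) : ℝ) = n.choose k + n.choose (k + 1) :=
      mod_cast Nat.choose_succ_succ n k
    simp only [sub_mul, coeff_add, coeff_sub, coeff_C_mul, coeff_X_mul, coeff_derivative,
      coeff_laguerrePoly, hn, hk, hk', hpascal]
    linear_combination
      (-1) ^ k * Real.Gamma (n + a + 1) * (Real.Gamma (k + a + 1))⁻¹ *
          (n.choose k + n.choose (k + 1)) * hfact
        + (-1) ^ k * Real.Gamma (n + a + 1) / n.factorial * n.choose (k + 1) * hΓ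

lemma sub_mul_laguerreL_sub_mul_laguerreL (a : ℝ) (n : ℕ) (u : ℝ) :
    (a - u) * laguerreL a (n + 1) u - u * laguerreL (a + 1) n u =
      (n + 2) * laguerreL (a - 1) (n + 2) u := by
  have h := congrArg (eval u) (sub_X_mul_laguerrePoly_add_X_mul_derivative a (n + 1))
  simp only [derivative_laguerrePoly_add_one, eval_add, eval_sub, eval_mul, eval_neg, eval_C,
    eval_X, eval_laguerrePoly] at h
  push_cast at h
  linear_combination h

end Laguerre

section SignIntegral

variable {E : Type*} [NormedAddCommGroup E] [NormedSpace ℝ E]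

lemma measurable_real_sign : Measurable Real.sign :=
  .ite measurableSet_Iio measurable_const (.ite measurableSet_Ioi measurable_const measurable_const)

lemma integrable_sign_sub_smul {μ : Measure ℝ} {f : ℝ → E} (hf : Integrable f μ) (x : ℝ) :
    Integrable (fun u => Real.sign (x - u) • f u) μ := by
  have hmeas : Measurable fun u => Real.sign (x - u) :=
    measurable_real_sign.comp (measurable_const.sub measurable_id)
  refine hf.bdd_smul 1 hmeas.aestronglyMeasurable (.of_forall fun u => ?_)
  rcases Real.sign_apply_eq (x - u) with h | h | h <;> simp [h]

lemma setIntegral_Ioi_sign_sub_smul {μ : Measure ℝ} [NullSingletonClass μ] {f : ℝ → E} {c x : ℝ}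
    (hcx : c ≤ x) (hf : IntegrableOn f (Set.Ioi c) μ) :
    ∫ u in Set.Ioi c, Real.sign (x - u) • f u ∂μ =
      (∫ u in c..x, f u ∂μ) - ∫ u in Set.Ioi x, f u ∂μ := by
  have hsign : IntegrableOn (fun u => Real.sign (x - u) • f u) (Set.Ioi c) μ :=
    integrable_sign_sub_smul hf x
  have hleft : ∫ u in c..x, Real.sign (x - u) • f u ∂μ = ∫ u in c..x, f u ∂μ := by
    simp only [intervalIntegral.integral_of_le hcx, integral_Ioc_eq_integral_Ioo]
    refine setIntegral_congr_fun measurableSet_Ioo fun u hu => ?_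
    simp only [Real.sign_of_pos (sub_pos.mpr hu.2), one_smul]
  have hright : ∫ u in Set.Ioi x, Real.sign (x - u) • f u ∂μ = -∫ u in Set.Ioi x, f u ∂μ := by
    rw [← integral_neg]
    refine setIntegral_congr_fun measurableSet_Ioi fun u hu => ?_
    simp only [Real.sign_of_neg (sub_neg.mpr hu), neg_one_smul]
  rw [← intervalIntegral.integral_interval_add_Ioi hsign
    (hsign.mono_set (Set.Ioi_subset_Ioi hcx)), hleft, hright, sub_eq_add_neg]

lemma setIntegral_Ioi_sign_sub_smul_of_hasDerivAt_of_tendsto [CompleteSpace E] {F f : ℝ → E}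
    {c x : ℝ} {l : E} (hcx : c ≤ x) (hcont : ContinuousOn F (Set.Ici c))
    (hderiv : ∀ u ∈ Set.Ioi c, HasDerivAt F (f u) u) (hf : IntegrableOn f (Set.Ioi c))
    (hlim : Tendsto F atTop (𝓝 l)) :
    ∫ u in Set.Ioi c, Real.sign (x - u) • f u = (2 : ℝ) • F x - F c - l := by
  have hleft : ∫ u in c..x, f u = F x - F c :=
    intervalIntegral.integral_eq_sub_of_hasDerivAt_of_le hcx (hcont.mono Set.Icc_subset_Ici_self)
      (fun u hu => hderiv u hu.1)
      ((intervalIntegrable_iff_integrableOn_Ioc_of_le hcx).mpr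
        (hf.mono_set Set.Ioc_subset_Ioi_self))
  have hright : ∫ u in Set.Ioi x, f u = l - F x :=
    integral_Ioi_of_hasDerivAt_of_tendsto
      ((hcont x hcx).mono (Set.Ici_subset_Ici.mpr hcx))
      (fun u hu => hderiv u (hcx.trans_lt hu)) (hf.mono_set (Set.Ioi_subset_Ioi hcx)) hlim
  rw [setIntegral_Ioi_sign_sub_smul hcx hf, hleft, hright, two_smul]
  abel

end SignIntegral

section GammaWeight

variable {s b : ℝ}

lemma rpow_mul_exp_mul_eval_monomial {u : ℝ} (hu : 0 < u) (n : ℕ) (c : ℝ) :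
    u ^ s * Real.exp (-b * u) * (monomial n c).eval u =
      u ^ (s + n) * Real.exp (-b * u) * c := by
  rw [eval_monomial, Real.rpow_add hu, Real.rpow_natCast]
  ring

lemma integrableOn_rpow_mul_exp_mul_eval (hs : -1 < s) (hb : 0 < b) (p : ℝ[X]) :
    IntegrableOn (fun u => u ^ s * Real.exp (-b * u) * p.eval u) (Set.Ioi 0) := by
  induction p using Polynomial.induction_on' with
  | add p q hp hq => simpa only [eval_add, mul_add, Pi.add_def] using hp.add hq
  | monomial n c =>
    have hpow := integrableOn_rpow_mul_exp_neg_mul_rpow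
      (lt_add_of_lt_of_nonneg hs n.cast_nonneg) one_pos hb
    simp only [Real.rpow_one] at hpow
    exact (integrableOn_congr_fun (fun u hu => rpow_mul_exp_mul_eval_monomial hu n c)
      measurableSet_Ioi).mpr (Integrable.mul_const hpow c)

lemma tendsto_rpow_mul_exp_mul_eval_atTop (hb : 0 < b) (p : ℝ[X]) :
    Tendsto (fun u => u ^ s * Real.exp (-b * u) * p.eval u) atTop (𝓝 0) := by
  induction p using Polynomial.induction_on' with
  | add p q hp hq => simpa only [eval_add, mul_add, add_zero] using hp.add hq
  | monomial n c =>
    have hpow := (tendsto_rpow_mul_exp_neg_mul_atTop_nhds_zero (s + n) b hb).mul_const c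
    rw [zero_mul] at hpow
    refine hpow.congr' ?_
    filter_upwards [eventually_gt_atTop 0] with u hu
    exact (rpow_mul_exp_mul_eval_monomial hu n c).symm

lemma hasDerivAt_rpow_mul_exp_mul_eval {u : ℝ} (hu : u ≠ 0) (p : ℝ[X]) :
    HasDerivAt (fun u => u ^ s * Real.exp (-b * u) * p.eval u)
      (u ^ (s - 1) * Real.exp (-b * u) * ((C s - C b * X) * p + X * derivative p).eval u) u := by
  have hpow : HasDerivAt (fun u : ℝ => u ^ s) (s * u ^ (s - 1)) u :=
    Real.hasDerivAt_rpow_const (.inl hu)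
  have hexp : HasDerivAt (fun u => Real.exp (-b * u)) (Real.exp (-b * u) * -b) u :=
    (hasDerivAt_const_mul (-b)).exp
  refine ((hpow.mul hexp).mul (p.hasDerivAt u)).congr_deriv ?_
  have hus : u ^ s = u ^ (s - 1) * u := by rw [← Real.rpow_add_one hu, sub_add_cancel]
  simp only [Pi.mul_apply, eval_add, eval_sub, eval_mul, eval_C, eval_X, hus]
  ring

lemma setIntegral_Ioi_sign_sub_mul_rpow_mul_exp_mul_eval {x : ℝ} (hs : 0 < s) (hb : 0 < b)
    (hx : 0 ≤ x) (p : ℝ[X]) :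
    ∫ u in Set.Ioi 0, Real.sign (x - u) *
        (u ^ (s - 1) * Real.exp (-b * u) * ((C s - C b * X) * p + X * derivative p).eval u) =
      2 * (x ^ s * Real.exp (-b * x) * p.eval x) := by
  have hcont : Continuous fun u => u ^ s * Real.exp (-b * u) * p.eval u := by
    have := Real.continuous_rpow_const hs.le
    fun_prop
  have hFTC := setIntegral_Ioi_sign_sub_smul_of_hasDerivAt_of_tendsto hx hcont.continuousOn
    (fun u hu => hasDerivAt_rpow_mul_exp_mul_eval (ne_of_gt hu) p)
    (integrableOn_rpow_mul_exp_mul_eval (by linarith) hb _)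
    (tendsto_rpow_mul_exp_mul_eval_atTop hb p)
  simpa only [smul_eq_mul, Real.zero_rpow hs.ne', zero_mul, sub_zero] using hFTC

end GammaWeight

lemma integrableOn_sign_sub_mul_rpow_mul_exp_mul_laguerreL {s : ℝ} (hs : -1 < s) (a : ℝ) (n : ℕ)
    (x : ℝ) :
    IntegrableOn (fun u => Real.sign (x - u) * (u ^ s * Real.exp (-u / 2)) * laguerreL a n u)
      (Set.Ioi 0) := by
  have h := integrable_sign_sub_smul
    (integrableOn_rpow_mul_exp_mul_eval hs one_half_pos (laguerrePoly a n)) x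
  simp only [smul_eq_mul, eval_laguerrePoly, ← mul_assoc] at h
  simpa only [IntegrableOn, ← mul_assoc, show ∀ u : ℝ, -u / 2 = -(1 / 2) * u by intro u; ring]

lemma setIntegral_Ioi_sign_sub_laguerreL_sub {a x : ℝ} (ha : 0 < a) (hx : 0 ≤ x) (n : ℕ) :
    (n + 2) * (∫ u in Set.Ioi (0 : ℝ),
        Real.sign (x - u) * (u ^ (a / 2 - 1) * Real.exp (-u / 2)) * laguerreL (a - 1) (n + 2) u)
      - ∫ u in Set.Ioi (0 : ℝ),
        Real.sign (x - u) * (u ^ (a / 2) * Real.exp (-u / 2)) * laguerreL (a + 1) n u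
      = 4 * (x ^ (a / 2) * Real.exp (-x / 2) * laguerreL a (n + 1) x) := by
  have hexp (u : ℝ) : -u / 2 = -(1 / 2) * u := by ring
  have hFTC := setIntegral_Ioi_sign_sub_mul_rpow_mul_exp_mul_eval (half_pos ha) one_half_pos hx
    (laguerrePoly a (n + 1))
  rw [eval_laguerrePoly, ← hexp] at hFTC
  rw [← integral_const_mul, ← integral_sub
    ((integrableOn_sign_sub_mul_rpow_mul_exp_mul_laguerreL (by linarith) _ _ x).const_mul _)
    (integrableOn_sign_sub_mul_rpow_mul_exp_mul_laguerreL (by linarith) _ _ x),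
    show (4 : ℝ) = 2 * 2 by norm_num, mul_assoc, ← hFTC, ← integral_const_mul]
  refine setIntegral_congr_fun measurableSet_Ioi fun u (hu : 0 < u) => ?_
  have hpow : u ^ (a / 2) = u ^ (a / 2 - 1) * u := by
    rw [← Real.rpow_add_one hu.ne', sub_add_cancel]
  simp only [derivative_laguerrePoly_add_one, eval_add, eval_sub, eval_mul, eval_neg, eval_C,
    eval_X, eval_laguerrePoly, hpow, ← hexp]
  linear_combination
    (-Real.sign (x - u) * u ^ (a / 2 - 1) * Real.exp (-u / 2)) *
      sub_mul_laguerreL_sub_mul_laguerreL a n u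

/-- Reconciliation of the two closed-form expressions for the β = 1 Laguerre kernel. -/
theorem laguerre_kernel_reconciliation (a : ℝ) (ha : 0 < a) (N : ℕ) (hN : 2 ≤ N)
    (x : ℝ) (hx : 0 < x) :
    x ^ (a / 2) * Real.exp (-x / 2) *
        ((Nat.factorial (N - 1)) / Real.Gamma (a + N)) * laguerreL a (N - 1) x
      - ((Nat.factorial N) / (4 * Real.Gamma (a + N))) *
        ∫ u in Set.Ioi (0 : ℝ),
          Real.sign (x - u) * (u ^ (a / 2 - 1) * Real.exp (-u / 2)) * laguerreL (a - 1) N u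
      = -(((Nat.factorial (N - 1)) / (4 * Real.Gamma (a + N))) *
          ∫ u in Set.Ioi (0 : ℝ),
            Real.sign (x - u) * (u ^ (a / 2) * Real.exp (-u / 2)) *
              laguerreL (a + 1) (N - 2) u) := by
  obtain ⟨n, rfl⟩ := Nat.exists_eq_add_of_le' hN
  have hkernel := setIntegral_Ioi_sign_sub_laguerreL_sub ha hx.le n
  rw [show n + 2 - 1 = n + 1 by omega, Nat.add_sub_cancel, Nat.factorial_succ (n + 1)]
  push_cast at hkernel ⊢
  linear_combination
    (-((n + 1).factorial : ℝ) / (4 * Real.Gamma (a + (n + 2)))) * hkernel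
end
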